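/- Let n, w, t ∈ ℕ and let A ⊆ ℕ^n be a constant-weight code, i.e., |X| = w for all X ∈ A, with minimum symmetric L1 distance d_L1(X,Y) ≥ 2t + 2 for all distinct X, Y ∈ A. Then there exists a decoding function Dec : ℕ^n → ℕ^n × Bool such that for every X ∈ A and every Y ∈ ℕ^n: (i) if d_L1(X,Y) ≤ t then Dec(Y) = (X, true); and (ii) if Dec(Y) = (X', true) and either min(|Y ∸ X|, |X ∸ Y|) = 0 or d_L1(X,Y) ≤ t + 1, then X' = X. -/

import Mathlib

/-!
The decoder returns `(X', true)` when some codeword `X'` lies within distance `t` of `Y`, and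
flags failure otherwise. By the triangle inequality, such an `X'` coincides with any codeword `X`
within distance `t + 1` of `Y`, since `t + (t + 1) < 2t + 2`. If the errors from `X` to `Y` are
all of one sign, then `dL1 X Y` is the weight difference of `X` and `Y`; as all codewords have the
same weight, this is at most `dL1 X' Y ≤ t`, so the previous case applies.
-/

/-- symmetric `L₁` distance `Σᵢ |xᵢ - yᵢ|` on `ℕⁿ` -/
def dL1 {n : ℕ} (X Y : Fin n → ℕ) : ℕ := ∑ i, ((X i - Y i) + (Y i - X i))

theorem dL1_triangle {n : ℕ} (X X' Y : Fin n → ℕ) : dL1 X X' ≤ dL1 X Y + dL1 X' Y := by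
  unfold dL1
  rw [← Finset.sum_add_distrib]
  exact Finset.sum_le_sum fun i _ => by omega

theorem dL1_eq_add {n : ℕ} (X Y : Fin n → ℕ) :
    dL1 X Y = (∑ i, (X i - Y i)) + ∑ i, (Y i - X i) :=
  Finset.sum_add_distrib

theorem weight_balance {n : ℕ} (X Y : Fin n → ℕ) :
    (∑ i, X i) + ∑ i, (Y i - X i) = (∑ i, Y i) + ∑ i, (X i - Y i) := by
  rw [← Finset.sum_add_distrib, ← Finset.sum_add_distrib]
  exact Finset.sum_congr rfl fun i _ => by omega

/-- Among words of equal weight, one differing from `Y` by errors of a single sign is a closest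
one to `Y`. -/
theorem dL1_le_of_unidirectional {n : ℕ} {X X' Y : Fin n → ℕ}
    (hXX' : (∑ i, X i) = ∑ i, X' i)
    (h : min (∑ i, (Y i - X i)) (∑ i, (X i - Y i)) = 0) : dL1 X Y ≤ dL1 X' Y := by
  have h1 := weight_balance X Y
  have h2 := weight_balance X' Y
  rw [dL1_eq_add, dL1_eq_add]
  omega

/-- For a constant-weight code `A ⊆ ℕⁿ` (all words of `L₁` weight `w`) with minimum
symmetric `L₁` distance `≥ 2t + 2`, there is a decoding function `Dec` such that for
every sent `X ∈ A` and received `Y ∈ ℕⁿ`: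
(i) if `d_L1(X,Y) ≤ t` then `Dec Y = (X, true)`; and
(ii) if `Dec Y = (X', true)` and either `min(|Y ∸ X|, |X ∸ Y|) = 0` or
`d_L1(X,Y) ≤ t + 1`, then `X' = X`. -/
theorem exists_tSyEC_decoder (n w t : ℕ) (A : Set (Fin n → ℕ))
    (hw : ∀ X ∈ A, (∑ i, X i) = w)
    (hd : ∀ X ∈ A, ∀ Y ∈ A, X ≠ Y → 2 * t + 2 ≤ dL1 X Y) :
    ∃ Dec : (Fin n → ℕ) → (Fin n → ℕ) × Bool,
      ∀ X ∈ A, ∀ Y : Fin n → ℕ,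
        (dL1 X Y ≤ t → Dec Y = (X, true)) ∧
        (∀ X' : Fin n → ℕ, Dec Y = (X', true) →
          (min (∑ i, (Y i - X i)) (∑ i, (X i - Y i)) = 0 ∨ dL1 X Y ≤ t + 1) →
          X' = X) := by
  classical
  have uniq : ∀ X ∈ A, ∀ X' ∈ A, ∀ Y, dL1 X Y ≤ t + 1 → dL1 X' Y ≤ t → X' = X := by
    intro X hX X' hX' Y h h'
    by_contra hne
    have h1 := hd X hX X' hX' (Ne.symm hne)
    have h2 := dL1_triangle X X' Y
    omega
  refine ⟨fun Y => if h : ∃ X' ∈ A, dL1 X' Y ≤ t then (h.choose, true) else (0, false), ?_⟩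
  intro X hX Y
  by_cases h : ∃ X' ∈ A, dL1 X' Y ≤ t
  · obtain ⟨hA, ht⟩ := h.choose_spec
    simp only [dif_pos h, Prod.mk.injEq, and_true]
    refine ⟨fun hXY => uniq X hX _ hA Y (by omega) ht, ?_⟩
    rintro X' rfl (hmin | hle)
    · have := dL1_le_of_unidirectional ((hw X hX).trans (hw _ hA).symm) hmin
      exact uniq X hX _ hA Y (by omega) ht
    · exact uniq X hX _ hA Y hle ht
  · simp only [dif_neg h]
    exact ⟨fun hXY => absurd ⟨X, hX, hXY⟩ h, by simp⟩
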